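/- Let Σ be a finite linearly ordered alphabet and S = {s1, …, sk} a set of strings of length n over Σ. Let s*_H be the lexicographically smallest string of length n minimizing Σ_{j=1}^{k} ∂Ham(·, s_j), and let s*_SH be the lexicographically smallest string of length n minimizing Σ_{j=1}^{k} ∂SH(·, s_j). Then for each position i with 1 ≤ i ≤ n: if s*_SH[i] ≠ s*_H[i], then SW(S, s*_SH, i−1) ≠ ∅ or SW(S, s*_SH, i) ≠ ∅. -/

import Mathlib

/-!
Strings of length `n` over an alphabet `α` are modelled as functions `ℕ → α`,
where only the values at positions `0, …, n-1` (0-indexed) are relevant.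
A swap at (0-indexed) position `p` exchanges the letters at positions `p` and `p+1`.
A swap permutation is modelled as a `Finset ℕ` of swap positions, pairwise at
distance ≥ 2 (equivalently: containing no two consecutive positions).
-/

universe u

variable {α : Type u}

/-- `P` is a swap permutation for strings of length `n`: every swap position is in range
and no two swaps overlap (positions are pairwise at distance ≥ 2). -/
def IsSwapSet (n : ℕ) (P : Finset ℕ) : Prop :=
  (∀ p ∈ P, p + 1 < n) ∧ (∀ p ∈ P, p + 1 ∉ P)

/-- Apply a set of pairwise disjoint swaps to a string. -/
def applySwaps (P : Finset ℕ) (s : ℕ → α) : ℕ → α := fun i =>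
  if i ∈ P then s (i + 1)
  else if 0 < i ∧ i - 1 ∈ P then s (i - 1)
  else s i

/-- The swap permutation `P` transforms `s1` into `s2` (as length-`n` strings). -/
def Transforms (n : ℕ) (P : Finset ℕ) (s1 s2 : ℕ → α) : Prop :=
  IsSwapSet n P ∧ ∀ i < n, applySwaps P s1 i = s2 i

/-- Two length-`n` strings are matching if some swap permutation transforms one
into the other. -/
def SwMatching (n : ℕ) (s1 s2 : ℕ → α) : Prop :=
  ∃ P : Finset ℕ, Transforms n P s1 s2

/-- `P` is a *valid* swap permutation transforming `s1` into `s2`: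
it transforms `s1` into `s2` and never swaps two identical letters. -/
def ValidTransform (n : ℕ) (P : Finset ℕ) (s1 s2 : ℕ → α) : Prop :=
  Transforms n P s1 s2 ∧ ∀ p ∈ P, s1 p ≠ s1 (p + 1)

/-- Hamming distance of two length-`n` strings. -/
noncomputable def hamDist {β : Type*} (n : ℕ) (s t : ℕ → β) : ℕ :=
  letI : DecidablePred (fun i => s i ≠ t i) := fun _ => Classical.propDecidable _
  ((Finset.range n).filter (fun i => s i ≠ t i)).card

/-- Swap distance: the number of swaps of the valid swap permutation transforming
`s1` into `s2` (unique when it exists), and `⊤` if the strings are not matching. -/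
noncomputable def swapDist (n : ℕ) (s1 s2 : ℕ → α) : ℕ∞ :=
  sInf {m : ℕ∞ | ∃ P : Finset ℕ, ValidTransform n P s1 s2 ∧ m = (P.card : ℕ∞)}

/-- Swap+Hamming distance: minimum over all length-`n` strings `t` of
`∂S(s1,t) + ∂Ham(t,s2)`. -/
noncomputable def shDist (n : ℕ) (s1 s2 : ℕ → α) : ℕ∞ :=
  ⨅ t : ℕ → α, swapDist n s1 t + (hamDist n t s2 : ℕ∞)

/-- Number of occurrences of the letter `x` at positions `a ≤ i < b` of the string `s`. -/
noncomputable def countIn {β : Type*} (s : ℕ → β) (a b : ℕ) (x : β) : ℕ :=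
  letI : DecidablePred (fun i => s i = x) := fun _ => Classical.propDecidable _
  ((Finset.Ico a b).filter (fun i => s i = x)).card

/-- Greedy (left-to-right) swap set between two strings: position `p` is greedily
swapped iff `s1[p] = s2[p+1]`, `s1[p+1] = s2[p]`, `s1[p] ≠ s1[p+1]`, and position
`p-1` was not swapped. -/
def greedyMem (s1 s2 : ℕ → α) : ℕ → Prop
  | 0 => s1 0 = s2 1 ∧ s1 1 = s2 0 ∧ s1 0 ≠ s1 1
  | p + 1 => (s1 (p + 1) = s2 (p + 2) ∧ s1 (p + 2) = s2 (p + 1) ∧ s1 (p + 1) ≠ s1 (p + 2))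
      ∧ ¬ greedyMem s1 s2 p

/-- The greedy swap set `G(s1,s2)` restricted to the valid positions `0, …, n-2`. -/
noncomputable def greedySet (n : ℕ) (s1 s2 : ℕ → α) : Finset ℕ :=
  letI : DecidablePred (greedyMem s1 s2) := fun _ => Classical.propDecidable _
  (Finset.range (n - 1)).filter (greedyMem s1 s2)

/-- `SW(S, t, i)`: the set of indices `j` such that `t` and `s j` have a greedy swap
at position `i`. -/
noncomputable def SW (n : ℕ) {k : ℕ} (s : Fin k → ℕ → α) (t : ℕ → α) (i : ℕ) :
    Finset (Fin k) :=
  letI : DecidablePred (fun j : Fin k => i ∈ greedySet n t (s j)) :=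
    fun _ => Classical.propDecidable _
  Finset.univ.filter (fun j => i ∈ greedySet n t (s j))

/-- The swap `(p, p+1)` is necessary for the input string `s i` if every string
matching all strings of `S` has a swap at position `p` in its valid swap
permutation towards `s i`. -/
def NecessarySwap (n : ℕ) {k : ℕ} (s : Fin k → ℕ → α) (i : Fin k) (p : ℕ) : Prop :=
  ∀ t : ℕ → α, (∀ j, SwMatching n t (s j)) →
    ∀ P : Finset ℕ, ValidTransform n P t (s i) → p ∈ P

/-- Lexicographic strict order on length-`n` strings. -/
def LexLt {β : Type*} [LinearOrder β] (n : ℕ) (s t : ℕ → β) : Prop :=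
  ∃ i < n, s i < t i ∧ ∀ j < i, s j = t j

/-!
Performing a swap of `t` saves one unit over correcting its two positions letter by letter exactly
when `t` and `s` carry the same two distinct letters there in opposite order; any other swap saves
nothing. The Swap+Hamming distance is thus the Hamming distance minus the maximum number of pairwise
disjoint such crossings. The greedy scan attains this maximum, because a crossing that it skips can
be charged to its left neighbour.

If no greedy swap touches position `i` of `sSH`, then each greedy set remains available after
replacing `sSH[i]` by `sH[i]`, so this replacement costs no more in Swap+Hamming distance than in
Hamming distance. The opposite replacement in `sH` has exactly the opposite effect on the Hamming
distance, so by minimality of `sSH` and `sH` each new string is again a minimizer. One of the two is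
lexicographically smaller than the string it came from.
-/

open Finset Function

theorem applySwaps_of_mem {P : Finset ℕ} {p : ℕ} (hp : p ∈ P) (t : ℕ → α) :
    applySwaps P t p = t (p + 1) :=
  if_pos hp

theorem applySwaps_of_notMem {P : Finset ℕ} {i : ℕ} (hi : i ∉ P) (hi' : ∀ p ∈ P, p + 1 ≠ i)
    (t : ℕ → α) : applySwaps P t i = t i := by
  have hpred : ¬(0 < i ∧ i - 1 ∈ P) := fun h => hi' _ h.2 (Nat.sub_add_cancel h.1)
  simp only [applySwaps, if_neg hi, if_neg hpred]

/-- The cost (0 or 1) of correcting the letter `a` to `b`. -/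
noncomputable def mismatch (a b : α) : ℕ :=
  open Classical in if a ≠ b then 1 else 0

theorem hamDist_eq_sum_mismatch (n : ℕ) (t s : ℕ → α) :
    hamDist n t s = ∑ i ∈ range n, mismatch (t i) (s i) := by
  simp only [hamDist, mismatch, card_filter]
  congr!

theorem hamDist_congr_left {n : ℕ} {t u : ℕ → α} (h : ∀ i < n, t i = u i) (s : ℕ → α) :
    hamDist n t s = hamDist n u s := by
  simp only [hamDist_eq_sum_mismatch]
  exact sum_congr rfl fun i hi => by rw [h i (mem_range.1 hi)]

theorem hamDist_update_add_hamDist_update (n i : ℕ) (t u s : ℕ → α) :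
    hamDist n (update t i (u i)) s + hamDist n (update u i (t i)) s =
      hamDist n t s + hamDist n u s := by
  simp only [hamDist_eq_sum_mismatch, ← sum_add_distrib]
  refine sum_congr rfl fun j _ => ?_
  rcases eq_or_ne j i with rfl | hj
  · simp only [update_self, add_comm]
  · simp only [update_of_ne hj]

/-- The cost of performing the swaps `P` on `t` and then correcting the result to `s` letter by
letter. -/
noncomputable def swapCost (n : ℕ) (P : Finset ℕ) (t s : ℕ → α) : ℕ :=
  #P + hamDist n (applySwaps P t) s

/-- The pairs of letters of `t` and `s` at positions `p, p + 1` are `ab` and `ba` with `a ≠ b`.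
These are the candidates for the greedy swap set. -/
def IsCrossing (t s : ℕ → α) (p : ℕ) : Prop :=
  t p = s (p + 1) ∧ t (p + 1) = s p ∧ t p ≠ t (p + 1)

theorem IsCrossing.update {t s : ℕ → α} {p i : ℕ} (h : IsCrossing t s p) (hp : p ≠ i)
    (hp' : p + 1 ≠ i) (c : α) : IsCrossing (update t i c) s p := by
  simpa only [IsCrossing, update_of_ne hp, update_of_ne hp'] using h

theorem IsCrossing.mismatch_add_mismatch {t s : ℕ → α} {p : ℕ} (h : IsCrossing t s p) :
    mismatch (t p) (s p) + mismatch (t (p + 1)) (s (p + 1)) =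
      mismatch (t (p + 1)) (s p) + mismatch (t p) (s (p + 1)) + 2 := by
  obtain ⟨hs', hs, hne⟩ := h
  simp [mismatch, ← hs, ← hs', hne, hne.symm]

theorem mismatch_add_mismatch_le_of_not_isCrossing {t s : ℕ → α} {p : ℕ}
    (h : ¬IsCrossing t s p) :
    mismatch (t p) (s p) + mismatch (t (p + 1)) (s (p + 1)) ≤
      mismatch (t (p + 1)) (s p) + mismatch (t p) (s (p + 1)) + 1 := by
  by_cases hfit : t (p + 1) = s p ∧ t p = s (p + 1)
  · have heq : t p = t (p + 1) := by_contra fun hne => h ⟨hfit.2, hfit.1, hne⟩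
    simp [mismatch, ← hfit.1, ← hfit.2, heq]
  · unfold mismatch
    grind

namespace IsSwapSet

variable {n : ℕ} {P : Finset ℕ}

theorem mono (hP : IsSwapSet n P) {Q : Finset ℕ} (hQ : Q ⊆ P) : IsSwapSet n Q :=
  ⟨fun p hp => hP.1 p (hQ hp), fun p hp hp' => hP.2 p (hQ hp) (hQ hp')⟩

theorem applySwaps_succ (hP : IsSwapSet n P) {p : ℕ} (hp : p ∈ P) (t : ℕ → α) :
    applySwaps P t (p + 1) = t p := by
  simp [applySwaps, hP.2 p hp, hp]

theorem sum_range_eq {M : Type*} [AddCommMonoid M] (hP : IsSwapSet n P) (f : ℕ → M) :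
    ∑ i ∈ range n, f i =
      ∑ p ∈ P, (f p + f (p + 1)) + ∑ i ∈ range n \ (P ∪ P.image (· + 1)), f i := by
  have hdisj : Disjoint P (P.image (· + 1)) := by
    simpa [disjoint_right] using hP.2
  have hsub : P ∪ P.image (· + 1) ⊆ range n := by
    refine union_subset (fun p hp => mem_range.2 (Nat.lt_of_succ_lt (hP.1 p hp))) ?_
    exact image_subset_iff.2 fun p hp => mem_range.2 (hP.1 p hp)
  rw [← sum_sdiff hsub, sum_union hdisj, sum_image (add_left_injective 1).injOn,
    sum_add_distrib, add_comm]

theorem hamDist_applySwaps_add_sum (hP : IsSwapSet n P) (t s : ℕ → α) :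
    hamDist n (applySwaps P t) s +
        ∑ p ∈ P, (mismatch (t p) (s p) + mismatch (t (p + 1)) (s (p + 1))) =
      hamDist n t s + ∑ p ∈ P, (mismatch (t (p + 1)) (s p) + mismatch (t p) (s (p + 1))) := by
  have hswapped : ∑ p ∈ P, (mismatch (applySwaps P t p) (s p) +
        mismatch (applySwaps P t (p + 1)) (s (p + 1))) =
      ∑ p ∈ P, (mismatch (t (p + 1)) (s p) + mismatch (t p) (s (p + 1))) :=
    sum_congr rfl fun p hp => by rw [applySwaps_of_mem hp, hP.applySwaps_succ hp]
  have hfixed : ∑ i ∈ range n \ (P ∪ P.image (· + 1)), mismatch (applySwaps P t i) (s i) =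
      ∑ i ∈ range n \ (P ∪ P.image (· + 1)), mismatch (t i) (s i) := by
    refine sum_congr rfl fun i hi => ?_
    simp only [mem_sdiff, mem_union, mem_image, not_or, not_exists, not_and] at hi
    rw [applySwaps_of_notMem hi.2.1 hi.2.2]
  rw [hamDist_eq_sum_mismatch, hamDist_eq_sum_mismatch, hP.sum_range_eq, hP.sum_range_eq,
    hswapped, hfixed]
  ring

theorem swapCost_add_card (hP : IsSwapSet n P) {t s : ℕ → α} (h : ∀ p ∈ P, IsCrossing t s p) :
    swapCost n P t s + #P = hamDist n t s := by
  have hham := hP.hamDist_applySwaps_add_sum t s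
  rw [sum_congr rfl fun p hp => (h p hp).mismatch_add_mismatch, sum_add_distrib, sum_const,
    smul_eq_mul] at hham
  unfold swapCost
  omega

theorem hamDist_le_swapCost_add_card (hP : IsSwapSet n P) (t s : ℕ → α)
    [DecidablePred (IsCrossing t s)] :
    hamDist n t s ≤ swapCost n P t s + #{p ∈ P | IsCrossing t s p} := by
  have hham := hP.hamDist_applySwaps_add_sum t s
  have hpairs : ∑ p ∈ P, (mismatch (t p) (s p) + mismatch (t (p + 1)) (s (p + 1))) ≤
      ∑ p ∈ P, (mismatch (t (p + 1)) (s p) + mismatch (t p) (s (p + 1))) +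
        (#P + #{p ∈ P | IsCrossing t s p}) := by
    rw [card_filter, card_eq_sum_ones, ← sum_add_distrib, ← sum_add_distrib]
    refine sum_le_sum fun p _ => ?_
    split_ifs with hp
    · exact hp.mismatch_add_mismatch.le
    · exact mismatch_add_mismatch_le_of_not_isCrossing hp
  unfold swapCost
  omega

end IsSwapSet

theorem shDist_le_swapCost {n : ℕ} {P : Finset ℕ} (hP : IsSwapSet n P) {t : ℕ → α}
    (ht : ∀ p ∈ P, t p ≠ t (p + 1)) (s : ℕ → α) : shDist n t s ≤ swapCost n P t s := by
  refine (iInf_le _ (applySwaps P t)).trans ?_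
  rw [swapCost, Nat.cast_add]
  gcongr
  exact sInf_le ⟨P, ⟨⟨hP, fun _ _ => rfl⟩, ht⟩, rfl⟩

theorem le_shDist {n : ℕ} {t s : ℕ → α} {c : ℕ∞}
    (h : ∀ P, IsSwapSet n P → c ≤ swapCost n P t s) : c ≤ shDist n t s := by
  refine le_iInf fun u => ?_
  rw [swapDist, ENat.sInf_add]
  refine le_iInf₂ ?_
  rintro _ ⟨P, ⟨⟨hP, hu⟩, -⟩, rfl⟩
  rw [← hamDist_congr_left hu s, ← Nat.cast_add]
  exact h P hP

theorem shDist_add_card_le {n : ℕ} {P : Finset ℕ} (hP : IsSwapSet n P) {t s : ℕ → α}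
    (h : ∀ p ∈ P, IsCrossing t s p) : shDist n t s + #P ≤ hamDist n t s := by
  rw [← hP.swapCost_add_card h, Nat.cast_add]
  gcongr
  exact shDist_le_swapCost hP (fun p hp => (h p hp).2.2) s

theorem shDist_ne_top (n : ℕ) (t s : ℕ → α) : shDist n t s ≠ ⊤ :=
  ne_top_of_le_ne_top (ENat.natCast_ne_top _)
    (shDist_le_swapCost (P := ∅) (by simp [IsSwapSet]) (by simp) s)

theorem mem_greedySet_iff {n : ℕ} {t s : ℕ → α} {p : ℕ} :
    p ∈ greedySet n t s ↔
      p + 1 < n ∧ IsCrossing t s p ∧ ∀ q ∈ greedySet n t s, q + 1 ≠ p := by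
  have hmem (q : ℕ) : q ∈ greedySet n t s ↔ q + 1 < n ∧ greedyMem t s q := by
    simp only [greedySet, mem_filter, mem_range, Nat.lt_sub_iff_add_lt]
  cases p with
  | zero => simp [hmem, greedyMem, IsCrossing]
  | succ p =>
    simp only [hmem, greedyMem, IsCrossing]
    grind

theorem isCrossing_of_mem_greedySet {n : ℕ} {t s : ℕ → α} {p : ℕ} (hp : p ∈ greedySet n t s) :
    IsCrossing t s p :=
  (mem_greedySet_iff.1 hp).2.1

theorem isSwapSet_greedySet (n : ℕ) (t s : ℕ → α) : IsSwapSet n (greedySet n t s) :=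
  ⟨fun _ hp => (mem_greedySet_iff.1 hp).1, fun p hp hp' => (mem_greedySet_iff.1 hp').2.2 p hp rfl⟩

theorem card_le_card_greedySet {n : ℕ} {Q : Finset ℕ} (hQ : IsSwapSet n Q) {t s : ℕ → α}
    (h : ∀ q ∈ Q, IsCrossing t s q) : #Q ≤ #(greedySet n t s) := by
  have hcharge : ∀ q ∈ Q, ∃ p ∈ greedySet n t s, p = q ∨ p + 1 = q := by
    intro q hq
    by_contra! hnone
    have hqG : q ∈ greedySet n t s :=
      mem_greedySet_iff.2 ⟨hQ.1 q hq, h q hq, fun p hp => (hnone p hp).2⟩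
    exact (hnone q hqG).1 rfl
  choose! charge hmem hcharge using hcharge
  refine card_le_card_of_injOn charge hmem fun q hq r hr hqr => ?_
  have hq' : r ≠ q + 1 := fun h => hQ.2 q hq (h ▸ hr)
  have hr' : q ≠ r + 1 := fun h => hQ.2 r hr (h ▸ hq)
  have hchargeq := hcharge q hq
  have hcharger := hcharge r hr
  omega

theorem shDist_add_card_greedySet (n : ℕ) (t s : ℕ → α) :
    shDist n t s + #(greedySet n t s) = hamDist n t s := by
  classical
  have hG := isSwapSet_greedySet n t s
  have hcost := hG.swapCost_add_card fun _ => isCrossing_of_mem_greedySet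
  refine (shDist_add_card_le hG fun _ => isCrossing_of_mem_greedySet).antisymm ?_
  rw [← hcost, Nat.cast_add]
  gcongr
  refine le_shDist fun P hP => Nat.cast_le.2 ?_
  have hle := hP.hamDist_le_swapCost_add_card t s
  have hcard : #{p ∈ P | IsCrossing t s p} ≤ #(greedySet n t s) :=
    card_le_card_greedySet (hP.mono (filter_subset _ P)) fun _ hp => (mem_filter.1 hp).2
  omega

theorem shDist_update_add_hamDist_le {n i : ℕ} {t s : ℕ → α}
    (hi : ∀ p ∈ greedySet n t s, p ≠ i ∧ p + 1 ≠ i) (c : α) :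
    shDist n (update t i c) s + hamDist n t s ≤
      shDist n t s + hamDist n (update t i c) s := by
  have hle := shDist_add_card_le (t := update t i c) (isSwapSet_greedySet n t s) fun p hp =>
    (isCrossing_of_mem_greedySet hp).update (hi p hp).1 (hi p hp).2 c
  calc shDist n (update t i c) s + hamDist n t s
      = shDist n t s + (shDist n (update t i c) s + #(greedySet n t s)) := by
        rw [← shDist_add_card_greedySet, add_left_comm]
    _ ≤ shDist n t s + hamDist n (update t i c) s := by gcongr

theorem shDist_update_add_hamDist_update_le {n i : ℕ} {t s : ℕ → α}
    (hi : ∀ p ∈ greedySet n t s, p ≠ i ∧ p + 1 ≠ i) (u : ℕ → α) :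
    shDist n (update t i (u i)) s + hamDist n (update u i (t i)) s ≤
      shDist n t s + hamDist n u s := by
  rw [← ENat.add_le_add_iff_right (ENat.natCast_ne_top (hamDist n t s))]
  calc shDist n (update t i (u i)) s + hamDist n (update u i (t i)) s + hamDist n t s
      = shDist n (update t i (u i)) s + hamDist n t s + hamDist n (update u i (t i)) s := by
        rw [add_right_comm]
    _ ≤ shDist n t s + hamDist n (update t i (u i)) s + hamDist n (update u i (t i)) s :=
        add_le_add_left (shDist_update_add_hamDist_le hi (u i)) _
    _ = shDist n t s + hamDist n u s + hamDist n t s := by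
        rw [add_assoc, ← Nat.cast_add, hamDist_update_add_hamDist_update, Nat.cast_add, add_assoc,
          add_comm (hamDist n t s : ℕ∞)]

theorem mem_SW {n k : ℕ} {s : Fin k → ℕ → α} {t : ℕ → α} {p : ℕ} {j : Fin k} :
    j ∈ SW n s t p ↔ p ∈ greedySet n t (s j) := by
  simp only [SW, mem_filter, mem_univ, true_and]

theorem lexLt_update {β : Type*} [LinearOrder β] {n i : ℕ} (hi : i < n) {t : ℕ → β} {c : β}
    (hc : c < t i) : LexLt n (update t i c) t :=
  ⟨i, hi, by rwa [update_self], fun _ hj => update_of_ne hj.ne _ _⟩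

/-- Let `sH` be the lexicographically smallest length-`n` string
minimizing `∑ j, ∂Ham(·, s j)` and `sSH` the lexicographically smallest length-`n`
string minimizing `∑ j, ∂SH(·, s j)`. Then for each position `i < n` (0-indexed), if
`sSH[i] ≠ sH[i]`, then `SW(S, sSH, i-1) ≠ ∅` or `SW(S, sSH, i) ≠ ∅`. -/
theorem swap_from_center {α : Type u} [LinearOrder α] (n k : ℕ) (s : Fin k → ℕ → α)
    (sH sSH : ℕ → α)
    (hHmin : ∀ t : ℕ → α, ∑ j, hamDist n sH (s j) ≤ ∑ j, hamDist n t (s j))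
    (hHlex : ∀ t : ℕ → α,
      ∑ j, hamDist n t (s j) ≤ ∑ j, hamDist n sH (s j) → ¬ LexLt n t sH)
    (hSHmin : ∀ t : ℕ → α, ∑ j, shDist n sSH (s j) ≤ ∑ j, shDist n t (s j))
    (hSHlex : ∀ t : ℕ → α,
      ∑ j, shDist n t (s j) ≤ ∑ j, shDist n sSH (s j) → ¬ LexLt n t sSH)
    (i : ℕ) (hi : i < n) (hne : sSH i ≠ sH i) :
    (0 < i ∧ SW n s sSH (i - 1) ≠ ∅) ∨ SW n s sSH i ≠ ∅ := by
  by_contra! hSW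
  have hfix (j : Fin k) : ∀ p ∈ greedySet n sSH (s j), p ≠ i ∧ p + 1 ≠ i := by
    refine fun p hp => ⟨?_, ?_⟩ <;> rintro rfl
    · exact eq_empty_iff_forall_notMem.1 hSW.2 j (mem_SW.2 hp)
    · exact eq_empty_iff_forall_notMem.1 (hSW.1 p.succ_pos) j (mem_SW.2 hp)
  have hexchange : ∑ j, shDist n (update sSH i (sH i)) (s j) +
        (∑ j, hamDist n (update sH i (sSH i)) (s j) : ℕ) ≤
      ∑ j, shDist n sSH (s j) + (∑ j, hamDist n sH (s j) : ℕ) := by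
    simp only [Nat.cast_sum, ← sum_add_distrib]
    exact sum_le_sum fun j _ => shDist_update_add_hamDist_update_le (hfix j) sH
  rcases hne.lt_or_gt with hlt | hgt
  · have hfin : ∑ j, shDist n sSH (s j) ≠ ⊤ :=
      ENat.sum_ne_top.2 fun j _ => shDist_ne_top n sSH (s j)
    refine hHlex _ (Nat.cast_le.1 ((ENat.add_le_add_iff_left hfin).1 ?_)) (lexLt_update hi hlt)
    exact (add_le_add_left (hSHmin _) _).trans hexchange
  · refine hSHlex _ ((ENat.add_le_add_iff_right (ENat.natCast_ne_top _)).1 (hexchange.trans ?_))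
      (lexLt_update hi hgt)
    exact add_le_add_right (Nat.cast_le.2 (hHmin _)) _
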